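/- Let x ~ N(0,Σ) be a d-dimensional Gaussian with Σ positive definite, and let y ∈ {−1,+1} satisfy P(y=1 | x) = g(βᵀx) for a measurable function g: R → [0,1] and fixed β ∈ R^d with βᵀΣβ > 0. Then E[yx] = 2·E[(g(βᵀx) − 1/2)·(βᵀx)/(βᵀΣβ)]·Σβ. -/

import Mathlib

open MeasureTheory ProbabilityTheory Matrix

/-- For a centered Gaussian vector `x ~ N(0,Σ)` (characterized by every linear
functional `uᵀx` being `N(0, uᵀΣu)`) with `Σ` positive definite, and a `±1` label `y`
with `P(y = 1 ∣ x) = g(βᵀx)` (i.e. `E[y ∣ x] = 2g(βᵀx) − 1`), we have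
`E[yx] = 2·E[(g(βᵀx) − 1/2)·βᵀx/(βᵀΣβ)]·Σβ`. -/
theorem expectation_label_times_gaussian {Ω : Type*} [MeasurableSpace Ω] (μ : Measure Ω)
    [IsProbabilityMeasure μ] {d : ℕ} (x : Ω → Fin d → ℝ) (Y : Ω → ℝ)
    (S : Matrix (Fin d) (Fin d) ℝ) (hS : S.PosDef)
    (β : Fin d → ℝ) (g : ℝ → ℝ) (hg : Measurable g) (hg01 : ∀ t, g t ∈ Set.Icc (0:ℝ) 1)
    (hxmeas : Measurable x) (hYmeas : Measurable Y)
    (hGauss : ∀ u : Fin d → ℝ,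
      Measure.map (fun ω => ∑ i, u i * x ω i) μ =
        gaussianReal 0 (Real.toNNReal (u ⬝ᵥ S.mulVec u)))
    (hY : ∀ ω, Y ω = 1 ∨ Y ω = -1)
    (hcond : ∀ φ : (Fin d → ℝ) → ℝ, Measurable φ →
      Integrable (fun ω => φ (x ω)) μ →
      ∫ ω, Y ω * φ (x ω) ∂μ =
        ∫ ω, (2 * g (∑ i, β i * x ω i) - 1) * φ (x ω) ∂μ)
    (hβ : 0 < β ⬝ᵥ S.mulVec β) :
    ∀ k, ∫ ω, Y ω * x ω k ∂μ =
      2 * (∫ ω, (g (∑ i, β i * x ω i) - 1 / 2) *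
            ((∑ i, β i * x ω i) / (β ⬝ᵥ S.mulVec β)) ∂μ) * S.mulVec β k := by
  classical
  intro k
  set b : ℝ := β ⬝ᵥ S.mulVec β with hb
  let F : (Fin d → ℝ) → Ω → ℝ := fun u ω => ∑ i, u i * x ω i
  have hFm : ∀ u, Measurable (F u) := fun u => by
    refine Finset.measurable_sum _ fun i _ => ?_
    exact ((measurable_pi_apply i).comp hxmeas).const_mul (u i)
  have hsymm : ∀ u v : Fin d → ℝ, u ⬝ᵥ S.mulVec v = v ⬝ᵥ S.mulVec u := by
    intro u v
    have hT : Sᵀ = S := by simpa using! hS.isHermitian.eq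
    rw [dotProduct_mulVec, dotProduct_comm, ← mulVec_transpose, hT]
  have hnn : ∀ u : Fin d → ℝ, 0 ≤ u ⬝ᵥ S.mulVec u := by
    intro u
    simpa using hS.posSemidef.dotProduct_mulVec_nonneg u
  have hx : HasGaussianLaw x μ := by
    constructor
    refine isGaussian_of_map_eq_gaussianReal fun L => ?_
    refine ⟨0, _, Eq.trans ?_ (hGauss (fun i => L (Pi.single i 1)))⟩
    rw [Measure.map_map (by fun_prop) hxmeas]
    congr 1
    funext ω
    simp only [Function.comp]
    conv_lhs => rw [← Finset.univ_sum_single (x ω), map_sum]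
    refine Finset.sum_congr rfl fun i _ => ?_
    have : (Pi.single i (x ω i) : Fin d → ℝ) = x ω i • Pi.single i (1:ℝ) := by
      rw [← Pi.single_smul]; simp
    rw [this, map_smul, smul_eq_mul, mul_comm]
  let Lc : (Fin d → ℝ) → StrongDual ℝ (Fin d → ℝ) := fun u =>
    ∑ i, u i • ContinuousLinearMap.proj (R := ℝ) (φ := fun _ : Fin d => ℝ) i
  have hLc : ∀ u ω, Lc u (x ω) = F u ω := by
    intro u ω
    simp [Lc, F]
  have hFG : ∀ u, HasGaussianLaw (F u) μ := by
    intro u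
    have := hx.map_fun (Lc u)
    simpa only [hLc] using this
  have hpair : ∀ u v, HasGaussianLaw (fun ω => (F u ω, F v ω)) μ := by
    intro u v
    have := hx.map_fun ((Lc u).prod (Lc v))
    simpa only [ContinuousLinearMap.prod_apply, hLc] using this
  have hvar : ∀ u, Var[F u; μ] = u ⬝ᵥ S.mulVec u := by
    intro u
    rw [← variance_id_map (hFm u).aemeasurable, hGauss u, variance_id_gaussianReal,
      Real.coe_toNNReal _ (hnn u)]
  have hmean : ∀ u, ∫ ω, F u ω ∂μ = 0 := by
    intro u
    have := integral_map (μ := μ) (hFm u).aemeasurable (f := fun t : ℝ => t) (by fun_prop)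
    rw [← this, hGauss u, integral_id_gaussianReal]
  have hcov : ∀ u v, cov[F u, F v; μ] = v ⬝ᵥ S.mulVec u := by
    intro u v
    have h1 := variance_add (hFG u).memLp_two (hFG v).memLp_two
    have h2 : F u + F v = F (u + v) := by
      funext ω
      simp [F, add_mul, Finset.sum_add_distrib]
    rw [h2, hvar, hvar, hvar, mulVec_add, dotProduct_add, add_dotProduct, add_dotProduct,
      hsymm u v] at h1
    linarith
  set c : ℝ := S.mulVec β k / b with hc
  let v : Fin d → ℝ := Pi.single k 1 - c • β
  have hv0 : v ⬝ᵥ S.mulVec β = 0 := by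
    simp only [v, sub_dotProduct, smul_dotProduct, single_dotProduct, smul_eq_mul, one_mul]
    rw [← hb, hc, div_mul_cancel₀ _ hβ.ne', sub_self]
  have hind : IndepFun (F β) (F v) μ :=
    (hpair β v).indepFun_of_covariance_eq_zero (by rw [hcov, hv0])
  have hxk : ∀ ω, x ω k = F v ω + c * F β ω := by
    intro ω
    simp [F, v, sub_mul, Finset.sum_sub_distrib, Finset.mul_sum, mul_assoc, Pi.single_apply]
  let h : ℝ → ℝ := fun t => 2 * g t - 1
  have hhm : Measurable h := (hg.const_mul 2).sub_const 1
  have hint : ∀ u, Integrable (fun ω => h (F β ω) * F u ω) μ := by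
    intro u
    refine (hFG u).integrable.bdd_mul (c := 1) (hhm.comp (hFm β)).aestronglyMeasurable ?_
    refine Filter.Eventually.of_forall fun ω => ?_
    have := hg01 (F β ω)
    rw [Real.norm_eq_abs, abs_le]
    constructor <;> simp only [h] <;> linarith [this.1, this.2]
  have hzero : ∫ ω, h (F β ω) * F v ω ∂μ = 0 := by
    have := (hind.comp hhm measurable_id).integral_fun_mul_eq_mul_integral
      (hhm.comp (hFm β)).aestronglyMeasurable (hFm v).aestronglyMeasurable
    simp only [Function.comp, id] at this
    rw [this, hmean, mul_zero]
  have hxint : Integrable (fun ω => x ω k) μ := by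
    simp only [hxk]
    exact (hFG v).integrable.add ((hFG β).integrable.const_mul c)
  rw [hcond (fun z => z k) (measurable_pi_apply k) hxint]
  calc ∫ ω, (2 * g (∑ i, β i * x ω i) - 1) * x ω k ∂μ
      = ∫ ω, (h (F β ω) * F v ω + c * (h (F β ω) * F β ω)) ∂μ := by
        refine integral_congr_ae (Filter.Eventually.of_forall fun ω => ?_)
        simp only [hxk ω]
        simp only [h, F]
        ring
    _ = c * ∫ ω, h (F β ω) * F β ω ∂μ := by
        rw [integral_add (hint v) ((hint β).const_mul c), hzero, zero_add, integral_const_mul]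
    _ = _ := by
        have : ∀ ω, (g (∑ i, β i * x ω i) - 1 / 2) * ((∑ i, β i * x ω i) / b)
            = (1 / (2 * b)) * (h (F β ω) * F β ω) := by
          intro ω
          simp only [h, F]
          field_simp
        simp only [this, integral_const_mul, hc]
        field_simp
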